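/- Let S ⊂ ℤ² be a finite nonempty subset connected with respect to grid adjacency, and let v ∈ ℤ² be a nonzero vector such that S ∩ (S + v) = ∅. Then for all integers k ≠ ℓ, the translates S + k·v and S + ℓ·v are disjoint. -/

import Mathlib

/-- Grid adjacency on ℤ²: two points are adjacent iff their ℓ¹-distance is 1. -/
def GridAdj (p q : ℤ × ℤ) : Prop := |p.1 - q.1| + |p.2 - q.2| = 1

/-- A subset of ℤ² is grid-connected if any two of its points are joined by a
path of adjacent points staying inside the set. -/
def GridConnected (S : Set (ℤ × ℤ)) : Prop :=
  ∀ p ∈ S, ∀ q ∈ S,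
    Relation.ReflTransGen (fun a b => GridAdj a b ∧ a ∈ S ∧ b ∈ S) p q

/-- Translate of a subset of ℤ² by a vector. -/
def setTranslate (S : Set (ℤ × ℤ)) (v : ℤ × ℤ) : Set (ℤ × ℤ) := (· + v) '' S

lemma gridAdj_cases {p q : ℤ × ℤ} (h : GridAdj p q) :
    (q.1 = p.1 + 1 ∧ q.2 = p.2) ∨ (p.1 = q.1 + 1 ∧ q.2 = p.2) ∨
    (q.1 = p.1 ∧ q.2 = p.2 + 1) ∨ (q.1 = p.1 ∧ p.2 = q.2 + 1) := by
  unfold GridAdj at h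
  rcases abs_cases (p.1 - q.1) with h1 | h1 <;> rcases abs_cases (p.2 - q.2) with h2 | h2 <;> omega

lemma exists_crossing (S : Set (ℤ × ℤ)) (q w : ℤ × ℤ)
    (h : Relation.ReflTransGen (fun a b => GridAdj a b ∧ a ∈ S ∧ b ∈ S) q w) :
    ∃ (f : ℤ → ℤ → ℤ) (N : ℤ), (∀ X y, N ≤ y → f X y = 0) ∧
      (∀ X y, (X, y) ∉ S → f (X + 1) y = f X y) ∧
      (∀ X y, (X, y + 1) ∉ S → f X (y + 1) - f X y =
        (if q.1 < X ∧ q.2 = y + 1 then 1 else 0) - (if w.1 < X ∧ w.2 = y + 1 then 1 else 0)) := by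
  induction h with
  | refl => exact ⟨fun _ _ => 0, 0, by simp, by simp, by simp⟩
  | @tail b c _ hbc ih =>
    obtain ⟨f, N, h0, h1, h2⟩ := ih
    obtain ⟨hadj, hb, hc⟩ := hbc
    obtain ⟨b1, b2⟩ := b
    obtain ⟨c1, c2⟩ := c
    rcases gridAdj_cases hadj with ⟨e1, e2⟩ | ⟨e1, e2⟩ | ⟨e1, e2⟩ | ⟨e1, e2⟩ <;>
      simp only at e1 e2 <;> subst e2
    · refine ⟨f, N, h0, h1, fun X y hy => ?_⟩
      rw [h2 X y hy]
      have : ¬ (X = c1 ∧ y + 1 = c2) := by rintro ⟨rfl, rfl⟩; exact hy hc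
      simp only
      congr 2
      apply propext; omega
    · refine ⟨f, N, h0, h1, fun X y hy => ?_⟩
      rw [h2 X y hy]
      have : ¬ (X = b1 ∧ y + 1 = c2) := by rintro ⟨rfl, rfl⟩; exact hy hb
      simp only
      congr 2
      apply propext; omega
    · subst e1
      refine ⟨fun X y => f X y + if c1 < X ∧ y = b2 then 1 else 0, max N (b2 + 1), ?_, ?_, ?_⟩
      · intro X y hy
        have := h0 X y (by omega)
        simp only [this]; split_ifs <;> omega
      · intro X y hy
        have : ¬ (X = c1 ∧ y = b2) := by rintro ⟨rfl, rfl⟩; exact hy hb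
        simp only [h1 X y hy]; split_ifs <;> omega
      · intro X y hy
        have := h2 X y hy
        simp only at this ⊢
        split_ifs at this ⊢ <;> omega
    · subst e1
      refine ⟨fun X y => f X y - if c1 < X ∧ y = c2 then 1 else 0, max N (c2 + 1), ?_, ?_, ?_⟩
      · intro X y hy
        have := h0 X y (by omega)
        simp only [this]; split_ifs <;> omega
      · intro X y hy
        have : ¬ (X = c1 ∧ y = c2) := by rintro ⟨rfl, rfl⟩; exact hy hc
        simp only [h1 X y hy]; split_ifs <;> omega
      · intro X y hy
        have := h2 X y hy
        simp only at this ⊢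
        split_ifs at this ⊢ <;> omega

lemma exists_side (S : Set (ℤ × ℤ)) (q p : ℤ × ℤ) (hq : q ∈ S) (hp : p ∈ S)
    (h : Relation.ReflTransGen (fun a b => GridAdj a b ∧ a ∈ S ∧ b ∈ S) q p) :
    ∃ (c : ℤ × ℤ → ℤ) (N : ℤ),
      (∀ x : ℤ × ℤ, N ≤ x.2 → c x = if p.1 < x.1 then 1 else 0) ∧
      (∀ x y : ℤ × ℤ, GridAdj x y →
        x ∉ S → ¬ (x.1 = p.1 ∧ p.2 < x.2) → ¬ (x.1 = q.1 ∧ x.2 < q.2) →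
        y ∉ S → ¬ (y.1 = p.1 ∧ p.2 < y.2) → ¬ (y.1 = q.1 ∧ y.2 < q.2) → c x = c y) := by
  obtain ⟨f, N, h0, h1, h2⟩ := exists_crossing S q p h
  obtain ⟨p1, p2⟩ := p
  obtain ⟨q1, q2⟩ := q
  have key1 : ∀ X y, (X, y) ∉ S → ¬ (X = p1 ∧ y = p2) ∧ ¬ (X = q1 ∧ y = q2) := by
    intro X y hy
    constructor
    · rintro ⟨rfl, rfl⟩; exact hy hp
    · rintro ⟨rfl, rfl⟩; exact hy hq
  refine ⟨fun x => f x.1 x.2 + (if p1 < x.1 ∧ p2 ≤ x.2 then 1 else 0)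
    + (if q1 < x.1 ∧ x.2 < q2 then 1 else 0), max N (max p2 q2), ?_, ?_⟩
  · rintro ⟨X, y⟩ hy
    simp only at hy ⊢
    rw [h0 X y (by omega)]
    split_ifs <;> omega
  · rintro ⟨X, y⟩ ⟨X', y'⟩ hadj hx1 hx2 hx3 hy1 hy2 hy3
    have k1 := key1 _ _ hx1
    have k2 := key1 _ _ hy1
    rcases gridAdj_cases hadj with ⟨e1, e2⟩ | ⟨e1, e2⟩ | ⟨e1, e2⟩ | ⟨e1, e2⟩ <;>
      simp only at e1 e2 hx2 hx3 hy2 hy3 ⊢ <;> subst e1 <;> subst e2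
    · rw [h1 _ _ hx1]; split_ifs <;> omega
    · rw [h1 _ _ hy1]; split_ifs <;> omega
    · have := h2 _ _ hy1
      simp only at this
      split_ifs at this ⊢ <;> omega
    · have := h2 _ _ hx1
      simp only at this
      split_ifs at this ⊢ <;> omega

lemma main_pos (S : Set (ℤ × ℤ)) (hfin : S.Finite) (hne : S.Nonempty) (hconn : GridConnected S)
    (a b : ℤ) (ha : 0 < a) (hd : ∀ x ∈ S, x + (a, b) ∉ S) :
    ∀ k : ℕ, 0 < k → ∀ x ∈ S, x + (k : ℤ) • (a, b) ∉ S := by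
  obtain ⟨p, hp, hpm⟩ := Set.exists_max_image S (fun x => a * x.2 - b * x.1) hfin hne
  obtain ⟨q, hq, hqm⟩ := Set.exists_min_image S (fun x => a * x.2 - b * x.1) hfin hne
  obtain ⟨c, N, hc1, hc2⟩ := exists_side S q p hq hp (hconn q hq p hp)
  intro k
  induction k using Nat.strong_induction_on with
  | _ k ih =>
  intro hk x hx hy
  -- value of c on the translates
  have main : ∀ j : ℤ, j ≠ 0 → (∀ z ∈ S, z + j • (a, b) ∉ S) → ∀ z ∈ S,
      c (z + j • (a, b)) = if 0 < j then 1 else 0 := by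
    intro j hj hjd z hz
    have off : ∀ z ∈ S, z + j • (a, b) ∉ S ∧
        ¬ ((z + j • (a, b)).1 = p.1 ∧ p.2 < (z + j • (a, b)).2) ∧
        ¬ ((z + j • (a, b)).1 = q.1 ∧ (z + j • (a, b)).2 < q.2) := by
      intro z hz
      refine ⟨hjd z hz, ?_, ?_⟩
      · rintro ⟨h1, h2⟩
        have := hpm z hz
        simp at h1 h2
        rw [← h1] at this
        have := mul_lt_mul_of_pos_left h2 ha
        linarith
      · rintro ⟨h1, h2⟩
        have := hqm z hz
        simp at h1 h2
        rw [← h1] at this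
        have := mul_lt_mul_of_pos_left h2 ha
        linarith
    have s1 : c (z + j • (a, b)) = c (p + j • (a, b)) := by
      have hr := hconn z hz p hp
      have gen : ∀ w, Relation.ReflTransGen (fun a b => GridAdj a b ∧ a ∈ S ∧ b ∈ S) z w →
          c (z + j • (a, b)) = c (w + j • (a, b)) := by
        intro w hw
        induction hw with
        | refl => rfl
        | tail _ hst ihw =>
          obtain ⟨hadj, hm1, hm2⟩ := hst
          rw [ihw]
          obtain ⟨o1, o2, o3⟩ := off _ hm1
          obtain ⟨o1', o2', o3'⟩ := off _ hm2
          exact hc2 _ _ (by simpa [GridAdj] using hadj) o1 o2 o3 o1' o2' o3'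
      exact gen p hr
    have z0 : ∀ w : ℤ × ℤ, w + (0, ((0 : ℕ) : ℤ)) = w := by intro w; ext <;> simp
    have offp : ∀ t : ℕ, p + j • (a, b) + (0, (t : ℤ)) ∉ S ∧
        ¬ ((p + j • (a, b) + (0, (t : ℤ))).1 = p.1 ∧ p.2 < (p + j • (a, b) + (0, (t : ℤ))).2) ∧
        ¬ ((p + j • (a, b) + (0, (t : ℤ))).1 = q.1 ∧ (p + j • (a, b) + (0, (t : ℤ))).2 < q.2) := by
      intro t
      refine ⟨?_, ?_, ?_⟩
      · rcases Nat.eq_zero_or_pos t with rfl | ht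
        · rw [z0]; exact hjd p hp
        · intro hmem
          have := hpm _ hmem
          simp at this
          have ht' : (0 : ℤ) < t := by exact_mod_cast ht
          nlinarith
      · rintro ⟨h1, h2⟩
        simp at h1
        omega
      · rintro ⟨h1, h2⟩
        have := hqm p hp
        have ht' : (0 : ℤ) ≤ t := by positivity
        simp at h1 h2
        rw [← h1] at this
        have := mul_lt_mul_of_pos_left h2 ha
        have := mul_nonneg ha.le ht'
        linarith
    have s2 : ∀ t : ℕ, c (p + j • (a, b) + (0, (t : ℤ))) = c (p + j • (a, b)) := by
      intro t
      induction t with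
      | zero => rw [z0]
      | succ t iht =>
        rw [← iht]
        obtain ⟨o1, o2, o3⟩ := offp t
        obtain ⟨o1', o2', o3'⟩ := offp (t + 1)
        exact hc2 _ _ (by simp [GridAdj]) o1' o2' o3' o1 o2 o3
    rw [s1, ← s2 (N - (p + j • (a, b)).2).toNat, hc1]
    · have : (p + j • (a, b) + (0, (((N - (p + j • (a, b)).2).toNat : ℕ) : ℤ))).1 = p.1 + j * a := by
        simp
      rw [this]
      congr 1
      apply propext
      constructor
      · intro h; by_contra h'; nlinarith
      · intro h; nlinarith
    · have := Int.self_le_toNat (N - (p + j • (a, b)).2)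
      rw [Prod.snd_add]
      simp only
      omega
  rcases Nat.lt_or_ge 1 k with hk1 | hk1
  · have m1 := main 1 one_ne_zero (by simpa using hd) x hx
    have m2 := main (-((k - 1 : ℕ) : ℤ)) (by omega) (by
      intro z hz hz'
      have := ih (k - 1) (by omega) (by omega) _ hz'
      apply this
      rw [add_assoc, ← add_smul]; simpa using hz) _ hy
    rw [add_assoc, ← add_smul] at m2
    have : (k : ℤ) + -((k - 1 : ℕ) : ℤ) = 1 := by omega
    rw [this, m1] at m2
    split_ifs at m2 <;> omega
  · have : k = 1 := by omega
    subst this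
    exact hd x hx (by simpa using hy)

lemma main_ne (S : Set (ℤ × ℤ)) (hfin : S.Finite) (hne : S.Nonempty) (hconn : GridConnected S)
    (a b : ℤ) (ha : a ≠ 0) (hd : ∀ x ∈ S, x + (a, b) ∉ S) :
    ∀ k : ℕ, 0 < k → ∀ x ∈ S, x + (k : ℤ) • (a, b) ∉ S := by
  rcases lt_or_gt_of_ne ha with h | h
  · intro k hk x hx hy
    have := main_pos S hfin hne hconn (-a) (-b) (by omega) (by
      intro x hx hy
      apply hd _ hy
      have : x + (-a, -b) + (a, b) = x := by ext <;> simp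
      rwa [this]) k hk _ hy
    apply this
    have : x + (k : ℤ) • (a, b) + (k : ℤ) • (-a, -b) = x := by ext <;> simp
    rwa [this]
  · exact main_pos S hfin hne hconn a b h hd

lemma main_all (S : Set (ℤ × ℤ)) (hfin : S.Finite) (hne : S.Nonempty) (hconn : GridConnected S)
    (v : ℤ × ℤ) (hv : v ≠ 0) (hd : ∀ x ∈ S, x + v ∉ S) :
    ∀ k : ℕ, 0 < k → ∀ x ∈ S, x + (k : ℤ) • v ∉ S := by
  obtain ⟨a, b⟩ := v
  by_cases ha : a = 0
  · have hb : b ≠ 0 := by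
      rintro rfl; subst ha; exact hv rfl
    have := main_ne (Prod.swap ⁻¹' S) (hfin.preimage Prod.swap_injective.injOn)
      (by obtain ⟨x, hx⟩ := hne; exact ⟨x.swap, by simpa using hx⟩)
      (by
        intro p hp q hq
        have := (hconn _ hp _ hq).lift (p := fun a b => GridAdj a b ∧
          a ∈ Prod.swap ⁻¹' S ∧ b ∈ Prod.swap ⁻¹' S) Prod.swap (by
          rintro x y ⟨h1, h2, h3⟩
          refine ⟨?_, by simpa using h2, by simpa using h3⟩
          unfold GridAdj at *
          simp only [Prod.fst_swap, Prod.snd_swap]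
          omega)
        simpa [Function.onFun] using this) b a hb (by
        intro x hx hy
        exact hd _ hx hy)
    intro k hk x hx hy
    exact this k hk x.swap (by simpa using hx) hy
  · exact main_ne S hfin hne hconn a b ha hd

/-- If a finite nonempty grid-connected set `S` is disjoint from `S + v` for a
nonzero vector `v`, then all translates `S + k • v`, `k ∈ ℤ`, are mutually
disjoint. -/
theorem shape_translates_disjoint (S : Set (ℤ × ℤ))
    (hfin : S.Finite) (hne : S.Nonempty) (hconn : GridConnected S)
    (v : ℤ × ℤ) (hv : v ≠ 0)
    (hdisj : S ∩ setTranslate S v = ∅) :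
    ∀ k ℓ : ℤ, k ≠ ℓ → setTranslate S (k • v) ∩ setTranslate S (ℓ • v) = ∅ := by
  have hd : ∀ x ∈ S, x + v ∉ S := by
    intro x hx hy
    have : x + v ∈ S ∩ setTranslate S v := ⟨hy, x, hx, rfl⟩
    rw [hdisj] at this
    exact this
  have key := main_all S hfin hne hconn v hv hd
  have key2 : ∀ k ℓ : ℤ, k < ℓ → ∀ x ∈ S, ∀ y ∈ S, x + k • v ≠ y + ℓ • v := by
    intro k ℓ hkl x hx y hy h
    apply key (ℓ - k).toNat (by omega) y hy
    rw [Int.toNat_of_nonneg (by omega), sub_smul]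
    have : y + (ℓ • v - k • v) = x := by
      rw [← add_sub_assoc, ← h]; simp
    rwa [this]
  intro k ℓ hkl
  rw [Set.eq_empty_iff_forall_notMem]
  rintro z ⟨⟨x, hx, hxz⟩, ⟨y, hy, hyz⟩⟩
  simp only at hxz hyz
  rcases lt_or_gt_of_ne hkl with h | h
  · exact key2 k ℓ h x hx y hy (hxz.trans hyz.symm)
  · exact key2 ℓ k h y hy x hx (hyz.trans hxz.symm)
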